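/- For every integer q > 2, the ratio E(G_{q²})/E₀ satisfies E(G_{q²})/E₀ ≤ (4q² − 2q)/((q² − q − 1)√(q+1)); in particular, this ratio tends to 0 as q → ∞. -/

import Mathlib

/-- The adjacency matrix of a simple graph over `ℝ` is Hermitian. -/
theorem SimpleGraph.adjMatrix_isHermitian {V : Type*} [Fintype V] (G : SimpleGraph V)
    [DecidableRel G.Adj] : (G.adjMatrix ℝ).IsHermitian := by
  rw [Matrix.IsHermitian, Matrix.conjTranspose_eq_transpose_of_trivial]
  exact SimpleGraph.isSymm_adjMatrix G

/-- The eigenvalues of the (real, symmetric) adjacency matrix of a simple graph,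
indexed by the vertex set (listed with multiplicity). -/
noncomputable def SimpleGraph.adjEigenvalues {V : Type*} [Fintype V] [DecidableEq V]
    (G : SimpleGraph V) : V → ℝ :=
  letI := Classical.decRel G.Adj
  (G.adjMatrix_isHermitian).eigenvalues

/-- The energy of a simple graph: the sum of the absolute values of the
eigenvalues of its adjacency matrix. -/
noncomputable def SimpleGraph.energy {V : Type*} [Fintype V] [DecidableEq V]
    (G : SimpleGraph V) : ℝ :=
  ∑ v, |G.adjEigenvalues v|

/-- The graph `G_{q²}` : `q` disjoint copies of the complete graph `K_q`
(the copies indexed by the first coordinate, a residue `i` mod `q`), together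
with, for each label `j`, the edges of a `q`-cycle joining `v_j[i]` and
`v_j[i ± 1 mod q]`.  Thus `(i, j)` is adjacent to `(i', j')` iff
(`i = i'` and `j ≠ j'`) or (`j = j'` and `i' = i ± 1 (mod q)`). -/
def gGraph (q : ℕ) : SimpleGraph (Fin q × Fin q) :=
  SimpleGraph.fromRel fun a b =>
    (a.1 = b.1 ∧ a.2 ≠ b.2) ∨ (a.2 = b.2 ∧ (b.1 : ℕ) = ((a.1 : ℕ) + 1) % q)

instance gGraph.instDecidableRelAdj (q : ℕ) : DecidableRel (gGraph q).Adj := fun a b =>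
  decidable_of_iff _ (SimpleGraph.fromRel_adj _ a b).symm

/-- `E₀ = k + √(k(n-1)(n-k))` evaluated for the `(q+1)`-regular graph `G_{q²}`
on `n = q²` vertices, i.e. `E₀ = (q+1) + √((q+1)(q²-1)(q²-q-1))`. -/
noncomputable def gE0 (q : ℕ) : ℝ :=
  ((q : ℝ) + 1) + Real.sqrt (((q : ℝ) + 1) * ((q : ℝ) ^ 2 - 1) * ((q : ℝ) ^ 2 - (q : ℝ) - 1))


theorem gg_quad (n : ℕ) (u : Fin (n+3) × Fin (n+3) → ℝ) [DecidableRel (gGraph (n+3)).Adj] :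
    ∑ x, u x * ∑ y, ((gGraph (n+3)).adjMatrix ℝ) x y * u y =
      (∑ i, (∑ j, u (i, j)) ^ 2) - (∑ x, u x ^ 2) + 2 * ∑ x : Fin (n+3) × Fin (n+3), u x * u (x.1 + 1, x.2) := by
  have hA : ∀ x y : Fin (n+3) × Fin (n+3), ((gGraph (n+3)).adjMatrix ℝ) x y =
      (if x.1 = y.1 then 1 else 0) - (if x = y then 1 else 0)
      + (if y = (x.1 + 1, x.2) then 1 else 0) + (if x = (y.1 + 1, y.2) then 1 else 0) := by
    rintro ⟨a, b⟩ ⟨c, d⟩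
    have key : ∀ a c : Fin (n+3), ((c : ℕ) = ((a : ℕ) + 1) % (n+3)) ↔ c = a + 1 := by
      intro a c
      rw [Fin.ext_iff, Fin.val_add]
      simp
    have h1 : a ≠ a + 1 := by
      intro h
      have := (key a a).2 h
      have ha := a.2
      rcases Nat.lt_or_ge (a.1 + 1) (n+3) with h' | h'
      · rw [Nat.mod_eq_of_lt h'] at this; omega
      · have : a.1 + 1 = n + 3 := by omega
        simp_all
    have h2 : ∀ a c : Fin (n+3), c = a + 1 → a = c + 1 → False := by
      intro a c h h'
      have e1 := (key a c).2 h
      have e2 := (key c a).2 h'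
      have ha := a.2
      have hc := c.2
      rcases Nat.lt_or_ge (a.1 + 1) (n+3) with h3 | h3
      · rw [Nat.mod_eq_of_lt h3] at e1
        rcases Nat.lt_or_ge (c.1 + 1) (n+3) with h4 | h4
        · rw [Nat.mod_eq_of_lt h4] at e2; omega
        · have h5 : c.1 + 1 = n + 3 := by omega
          rw [h5, Nat.mod_self] at e2; omega
      · have h5 : a.1 + 1 = n + 3 := by omega
        rw [h5, Nat.mod_self] at e1
        rw [e1, Nat.mod_eq_of_lt (by omega)] at e2; omega
    have h2' := h2 a c
    rw [SimpleGraph.adjMatrix_apply]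
    simp only [gGraph, SimpleGraph.fromRel_adj, key, Prod.mk.injEq, ne_eq]
    by_cases hbd : b = d
    · subst hbd
      by_cases hac : a = c
      · subst hac; simp [h1]
      · by_cases p : c = a + 1 <;> by_cases r : a = c + 1
        · exact (h2' p r).elim
        all_goals simp [hac, p, r, Ne.symm hac]
        all_goals simp_all
    · by_cases hac : a = c
      · subst hac; simp [hbd, Ne.symm hbd]
      · simp [hbd, hac, Ne.symm hbd, Ne.symm hac]
  have hσ : ∀ x : Fin (n+3) × Fin (n+3),
      ∑ y : Fin (n+3) × Fin (n+3), (if x.1 = y.1 then (1:ℝ) else 0) * u y = ∑ j, u (x.1, j) := by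
    intro x
    rw [Fintype.sum_prod_type]
    simp
  simp only [hA, add_mul, sub_mul, Finset.sum_add_distrib, Finset.sum_sub_distrib, hσ, mul_add, mul_sub]
  have t1 : ∑ x : Fin (n+3) × Fin (n+3), u x * ∑ j, u (x.1, j) = ∑ i, (∑ j, u (i, j)) ^ 2 := by
    rw [Fintype.sum_prod_type]
    refine Finset.sum_congr rfl fun i _ => ?_
    simp only []
    rw [← Finset.sum_mul, sq]
  have t2 : ∑ x : Fin (n+3) × Fin (n+3), u x * ∑ y, (if x = (y.1 + 1, y.2) then (1:ℝ) else 0) * u y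
      = ∑ x : Fin (n+3) × Fin (n+3), u x * u (x.1 + 1, x.2) := by
    simp only [Finset.mul_sum]
    rw [Finset.sum_comm]
    refine Finset.sum_congr rfl fun y _ => ?_
    simp [mul_comm]
  rw [t1, t2]
  simp
  simp only [sq]
  ring

theorem gg_bound (n : ℕ) (u : Fin (n+3) × Fin (n+3) → ℝ) (hu : ∑ x, u x ^ 2 = 1)
    [DecidableRel (gGraph (n+3)).Adj] :
    |∑ x, u x * ∑ y, ((gGraph (n+3)).adjMatrix ℝ) x y * u y| ≤
      3 + ((n:ℝ)+1)/(n+3) * ∑ i, (∑ j, u (i, j)) ^ 2 := by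
  rw [gg_quad, hu]
  set P := ∑ i, (∑ j, u (i, j)) ^ 2 with hP
  have hP0 : 0 ≤ P := by positivity
  have hP1 : P ≤ n + 3 := by
    have : P ≤ ∑ i : Fin (n+3), ((n:ℝ)+3) * ∑ j, u (i,j) ^ 2 := by
      refine Finset.sum_le_sum fun i _ => ?_
      have := sq_sum_le_card_mul_sum_sq (s := (Finset.univ : Finset (Fin (n+3)))) (f := fun j => u (i,j))
      simpa using this
    rw [← Finset.mul_sum, ← Fintype.sum_prod_type (fun x => u x ^ 2), hu] at this
    linarith
  have hs : ∑ x : Fin (n+3) × Fin (n+3), u (x.1 + 1, x.2) ^ 2 = 1 := by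
    rw [← hu]
    exact Equiv.sum_comp ((Equiv.addRight (1 : Fin (n+3))).prodCongr (Equiv.refl _)) (fun x => u x ^ 2)
  have hC : |2 * ∑ x : Fin (n+3) × Fin (n+3), u x * u (x.1 + 1, x.2)| ≤ 2 := by
    have a1 : 0 ≤ ∑ x : Fin (n+3) × Fin (n+3), (u x + u (x.1 + 1, x.2)) ^ 2 := by positivity
    have a2 : 0 ≤ ∑ x : Fin (n+3) × Fin (n+3), (u x - u (x.1 + 1, x.2)) ^ 2 := by positivity
    simp only [add_sq, sub_sq, Finset.sum_add_distrib, Finset.sum_sub_distrib, hu, hs, mul_assoc,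
      ← Finset.mul_sum] at a1 a2
    rw [abs_le]; constructor <;> linarith
  have hn : (0:ℝ) < n + 3 := by positivity
  have e : ((n:ℝ)+1)/(n+3) * P = P - 2 * (P/(n+3)) := by field_simp; ring
  have e1 : P/(n+3) ≤ 1 := by rw [div_le_one hn]; exact hP1
  have e2 : 0 ≤ P/(n+3) := by positivity
  have e3 : P/(n+3) ≤ P := div_le_self hP0 (by linarith [(Nat.cast_nonneg n : (0:ℝ) ≤ n)])
  rw [abs_le] at hC ⊢
  rw [e]
  constructor <;> linarith

theorem gg_energy (n : ℕ) : (gGraph (n+3)).energy ≤ 4 * ((n:ℝ)+3)^2 - 2 * ((n:ℝ)+3) := by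
  letI := Classical.decRel (gGraph (n+3)).Adj
  set hA := (gGraph (n+3)).adjMatrix_isHermitian with hAdef
  have hE : (gGraph (n+3)).energy = ∑ v, |hA.eigenvalues v| := rfl
  set U : (Fin (n+3) × Fin (n+3)) → (Fin (n+3) × Fin (n+3)) → ℝ :=
    fun v x => (hA.eigenvectorUnitary : Matrix _ _ ℝ) x v with hU
  have c1 : ∀ v, ∑ x, U v x ^ 2 = 1 := by
    intro v
    have h := congrFun (congrFun (Matrix.mem_unitaryGroup_iff'.1 hA.eigenvectorUnitary.2) v) v
    rw [Matrix.mul_apply] at h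
    simpa [sq, Matrix.star_apply, hU] using h
  have c2 : ∀ x y, ∑ v, U v x * U v y = if x = y then 1 else 0 := by
    intro x y
    have h := congrFun (congrFun (Matrix.mem_unitaryGroup_iff.1 hA.eigenvectorUnitary.2) x) y
    rw [Matrix.mul_apply, Matrix.one_apply] at h
    simpa [Matrix.star_apply, hU] using h
  have c3 : ∀ v x, ∑ y, ((gGraph (n+3)).adjMatrix ℝ) x y * U v y = hA.eigenvalues v * U v x := by
    intro v x
    have h := congrFun (hA.mulVec_eigenvectorBasis v) x
    simpa [Matrix.mulVec, dotProduct, hU, Matrix.IsHermitian.eigenvectorUnitary_apply] using h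
  have c4 : ∀ v, hA.eigenvalues v = ∑ x, U v x * ∑ y, ((gGraph (n+3)).adjMatrix ℝ) x y * U v y := by
    intro v
    simp only [c3]
    calc _ = hA.eigenvalues v * ∑ x, U v x ^ 2 := by rw [c1, mul_one]
      _ = _ := by rw [Finset.mul_sum]; exact Finset.sum_congr rfl fun x _ => by ring
  have c5 : ∑ v, ∑ i, (∑ j, U v (i, j)) ^ 2 = ((n:ℝ)+3)^2 := by
    rw [Finset.sum_comm]
    have : ∀ i : Fin (n+3), ∑ v, (∑ j, U v (i, j)) ^ 2 = (n:ℝ)+3 := by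
      intro i
      simp only [sq, Finset.sum_mul_sum]
      rw [Finset.sum_comm]
      have : ∀ j : Fin (n+3), ∑ v, ∑ k, U v (i,j) * U v (i,k) = 1 := by
        intro j
        rw [Finset.sum_comm]
        simp [c2]
      simp [this]
    simp only [this]
    simp [sq]
    ring
  rw [hE]
  calc _ ≤ ∑ v, (3 + ((n:ℝ)+1)/(n+3) * ∑ i, (∑ j, U v (i, j)) ^ 2) := by
        refine Finset.sum_le_sum fun v _ => ?_
        rw [c4]
        exact gg_bound n (U v) (c1 v)
    _ = _ := by
        rw [Finset.sum_add_distrib, ← Finset.mul_sum, c5]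
        have hn : (n:ℝ) + 3 ≠ 0 := by positivity
        simp
        field_simp
        ring

theorem gg_ratio (q : ℕ) (hq : 2 < q) :
      (gGraph q).energy / gE0 q ≤
        (4 * (q : ℝ) ^ 2 - 2 * (q : ℝ)) /
          (((q : ℝ) ^ 2 - (q : ℝ) - 1) * Real.sqrt ((q : ℝ) + 1)) := by
  obtain ⟨n, rfl⟩ : ∃ n, q = n + 3 := ⟨q - 3, by omega⟩
  have h := gg_energy n
  have hq : (3:ℝ) ≤ ((n + 3 : ℕ) : ℝ) := by push_cast; linarith [(Nat.cast_nonneg n : (0:ℝ) ≤ n)]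
  rw [show (n:ℝ) + 3 = ((n + 3 : ℕ) : ℝ) by push_cast; rfl] at h
  unfold gE0
  set q : ℝ := ((n + 3 : ℕ) : ℝ)
  have hp : 0 < q^2 - q - 1 := by nlinarith
  have hs : 0 < Real.sqrt (q + 1) := Real.sqrt_pos.2 (by linarith)
  apply div_le_div₀ (by nlinarith) h (by positivity)
  have : (q^2 - q - 1) * Real.sqrt (q+1) ≤ Real.sqrt ((q+1) * (q^2-1) * (q^2-q-1)) := by
    apply Real.le_sqrt_of_sq_le
    rw [mul_pow, Real.sq_sqrt (by linarith)]
    have : 0 ≤ (q+1) * (q^2-q-1) * q := by positivity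
    nlinarith
  linarith

/-- For every integer `q > 2`, `E(G_{q²})/E₀ ≤ (4q² - 2q)/((q² - q - 1)√(q+1))`;
in particular this ratio tends to `0` as `q → ∞`. -/
theorem energy_gGraph_ratio_le :
    (∀ q : ℕ, 2 < q →
      (gGraph q).energy / gE0 q ≤
        (4 * (q : ℝ) ^ 2 - 2 * (q : ℝ)) /
          (((q : ℝ) ^ 2 - (q : ℝ) - 1) * Real.sqrt ((q : ℝ) + 1))) ∧
    Filter.Tendsto (fun q : ℕ => (gGraph q).energy / gE0 q) Filter.atTop (nhds 0) := by
  refine ⟨gg_ratio, ?_⟩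
  have hlim : Filter.Tendsto (fun q : ℕ => 24 / Real.sqrt ((q : ℝ) + 1)) Filter.atTop (nhds 0) := by
    apply Filter.Tendsto.const_div_atTop
    exact Real.tendsto_sqrt_atTop.comp
      (Filter.tendsto_atTop_add_const_right _ 1 tendsto_natCast_atTop_atTop)
  refine tendsto_of_tendsto_of_tendsto_of_le_of_le' tendsto_const_nhds hlim ?_ ?_
  · refine Filter.Eventually.of_forall fun q => ?_
    have h1 : 0 ≤ (gGraph q).energy := Finset.sum_nonneg fun _ _ => abs_nonneg _
    have h2 : 0 ≤ gE0 q := by unfold gE0; positivity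
    exact div_nonneg h1 h2
  · filter_upwards [Filter.eventually_gt_atTop 2] with q hq
    refine (gg_ratio q hq).trans ?_
    have hq : (3:ℝ) ≤ q := by exact_mod_cast hq
    have hp : 0 < (q:ℝ)^2 - q - 1 := by nlinarith
    have hs : 0 < Real.sqrt ((q:ℝ) + 1) := Real.sqrt_pos.2 (by linarith)
    rw [← div_div]
    gcongr
    rw [div_le_iff₀ hp]
    nlinarith
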